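/- Let V be a finite set of positive integers with even maximum, and let R_k be a set of k+1 positive integers consisting of k odd numbers larger than max V and one even number larger than all of them. Then there is a bijection between the D-permutations of V and the generalized surjective staircases on V ∪ R_k that have no even maxima, under which: even cycle maxima of sigma correspond to fixed points of the staircase, even fixed points of sigma correspond to isolated fixed points, and odd fixed points of sigma correspond to odd maxima. -/

import Mathlib

attribute [local instance] Classical.propDecidable

noncomputable section

/-- The second-largest even element of `S` (0 if there is none). -/
def sndEvenMax (S : Finset ℕ) : ℕ :=
  ((S.filter fun a => Even a).erase (S.sup id)).sup id

/-- `S'`: the elements of `S` that are at most the second-largest even element. -/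
def Sprime (S : Finset ℕ) : Finset ℕ := S.filter fun a => a ≤ sndEvenMax S

/-- Generalized surjective staircases on `S`: excedent maps from `S` onto the even
elements of `S`. -/
def Staircases (S : Finset ℕ) : Finset (↥S → ↥S) :=
  Finset.univ.filter fun f =>
    (∀ a : ↥S, (a : ℕ) ≤ (f a : ℕ) ∧ Even ((f a : ℕ))) ∧
    (∀ b : ↥S, Even (b : ℕ) → ∃ a : ↥S, f a = b)

/-- number of odd maxima -/
def moS (S : Finset ℕ) (f : ↥S → ↥S) : ℕ :=
  (Finset.univ.filter fun a : ↥S =>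
    (a : ℕ) ≤ sndEvenMax S ∧ Odd (a : ℕ) ∧ ((f a : ℕ) = S.sup id)).card

/-- number of even maxima -/
def meS (S : Finset ℕ) (f : ↥S → ↥S) : ℕ :=
  (Finset.univ.filter fun a : ↥S =>
    (a : ℕ) ≤ sndEvenMax S ∧ Even (a : ℕ) ∧ ((f a : ℕ) = S.sup id)).card

def IsFixedPtS (S : Finset ℕ) (f : ↥S → ↥S) (a : ↥S) : Prop :=
  (a : ℕ) ≤ sndEvenMax S ∧ Even (a : ℕ) ∧ f a = a

/-- number of isolated fixed points -/
def fiS (S : Finset ℕ) (f : ↥S → ↥S) : ℕ :=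
  (Finset.univ.filter fun a : ↥S =>
    IsFixedPtS S f a ∧ ∀ b : ↥S, f b = a → b = a).card

/-- number of doubled fixed points -/
def fdS (S : Finset ℕ) (f : ↥S → ↥S) : ℕ :=
  (Finset.univ.filter fun a : ↥S =>
    IsFixedPtS S f a ∧ ∃ b : ↥S, b ≠ a ∧ f b = a).card

/-- the least even element of `S` larger than `a` -/
def nextEven (S : Finset ℕ) (a : ℕ) : ℕ := sInf {b : ℕ | b ∈ S ∧ Even b ∧ a < b}

def IsSurfixedPtS (S : Finset ℕ) (f : ↥S → ↥S) (a : ↥S) : Prop :=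
  (a : ℕ) ≤ sndEvenMax S ∧ Odd (a : ℕ) ∧ (f a : ℕ) = nextEven S (a : ℕ)

/-- number of isolated surfixed points -/
def siS (S : Finset ℕ) (f : ↥S → ↥S) : ℕ :=
  (Finset.univ.filter fun a : ↥S =>
    IsSurfixedPtS S f a ∧ ∀ b : ↥S, f b = f a → b = a).card

/-- number of doubled surfixed points -/
def sdS (S : Finset ℕ) (f : ↥S → ↥S) : ℕ :=
  (Finset.univ.filter fun a : ↥S =>
    IsSurfixedPtS S f a ∧ ∃ b : ↥S, b ≠ a ∧ f b = f a).card

/-- The generalized Dumont–Foata polynomial `Λ_S`, evaluated at elements of a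
commutative ring. -/
def Lam (R : Type) [CommRing R] (S : Finset ℕ) (x y z xb yb zb : R) : R :=
  ∑ f ∈ Staircases S,
    x ^ moS S f * y ^ fdS S f * z ^ siS S f * xb ^ meS S f * yb ^ fiS S f * zb ^ sdS S f


/-- D-permutations of `V`. -/
def DPerms (V : Finset ℕ) : Finset (Equiv.Perm ↥V) :=
  Finset.univ.filter fun σ => ∀ a : ↥V,
    (Odd (a : ℕ) → (a : ℕ) ≤ ((σ a : ℕ))) ∧ (Even (a : ℕ) → ((σ a : ℕ)) ≤ (a : ℕ))

/-!
Walk backwards along the cycle of `x` in `σ` until an element `≥ x` is met, and call it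
`backReturn σ x`. A permutation is determined by this map, so by counting `backReturn` is a
bijection from the permutations onto the maps `g` with `x ≤ g x`. Its fixed points are the cycle
maxima, and its fibres tell where `σ` ascends: `σ y ≤ y` iff the fibre over `y` is nonempty, and
`y ≤ σ y` iff this fibre is contained in `{y}`. For a D-permutation of `V`, `backReturn` thus takes
odd values only at fixed points; sending these, together with all new elements, to the new maximum
gives the staircase.
-/

lemma prod_card_filter_le_eq_factorial {α : Type*} [LinearOrder α] (s : Finset α) :
    ∏ x ∈ s, (s.filter (x ≤ ·)).card = s.card.factorial := by
  induction s using Finset.induction_on_min with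
  | empty => simp
  | insert a s ha ih =>
    have hnot : a ∉ s := fun h ↦ (ha a h).false
    have hmin : (insert a s).filter (a ≤ ·) = insert a s :=
      Finset.filter_true_of_mem (by simpa using fun x hx ↦ (ha x hx).le)
    have hrest : ∀ x ∈ s, (insert a s).filter (x ≤ ·) = s.filter (x ≤ ·) := fun x hx ↦ by
      rw [Finset.filter_insert, if_neg (ha x hx).not_ge]
    rw [Finset.prod_insert hnot, hmin, Finset.card_insert_of_notMem hnot, Nat.factorial_succ, ← ih]
    exact congrArg _ (Finset.prod_congr rfl fun x hx ↦ by rw [hrest x hx])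

section BackReturn

variable {α : Type*} [LinearOrder α] [Finite α]

lemma exists_le_inv_pow_succ_apply (σ : Equiv.Perm α) (x : α) :
    ∃ n : ℕ, x ≤ (σ⁻¹ ^ (n + 1)) x := by
  refine ⟨orderOf σ⁻¹ - 1, ?_⟩
  rw [Nat.sub_add_cancel (orderOf_pos _), pow_orderOf_eq_one, Equiv.Perm.one_apply]

/-- The first element `≥ x` among `σ⁻¹ x, σ⁻² x, …`; it exists because `x` itself recurs. -/
def backReturn (σ : Equiv.Perm α) (x : α) : α :=
  (σ⁻¹ ^ (Nat.find (exists_le_inv_pow_succ_apply σ x) + 1)) x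

lemma le_backReturn (σ : Equiv.Perm α) (x : α) : x ≤ backReturn σ x :=
  Nat.find_spec (exists_le_inv_pow_succ_apply σ x)

lemma exists_pow_succ_backReturn (σ : Equiv.Perm α) (x : α) :
    ∃ n : ℕ, (σ ^ (n + 1)) (backReturn σ x) = x ∧
      ∀ i < n, (σ ^ (i + 1)) (backReturn σ x) < x := by
  refine ⟨Nat.find (exists_le_inv_pow_succ_apply σ x), by simp [backReturn], fun i hi ↦ ?_⟩
  set n := Nat.find (exists_le_inv_pow_succ_apply σ x) with hn
  have hlt : (σ⁻¹ ^ (n - 1 - i + 1)) x < x :=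
    not_le.mp (Nat.find_min (exists_le_inv_pow_succ_apply σ x) (by omega))
  have hsplit : n + 1 = (i + 1) + (n - 1 - i + 1) := by omega
  rwa [backReturn, ← hn, hsplit, pow_add σ⁻¹ (i + 1), ← Equiv.Perm.mul_apply, inv_pow σ (i + 1),
    mul_inv_cancel_left]

lemma backReturn_apply_of_apply_le {σ : Equiv.Perm α} {y : α} (h : σ y ≤ y) :
    backReturn σ (σ y) = y := by
  have hfind : Nat.find (exists_le_inv_pow_succ_apply σ (σ y)) = 0 := by
    simpa [Nat.find_eq_zero] using h
  simp [backReturn, hfind]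

lemma apply_backReturn_le (σ : Equiv.Perm α) (x : α) : σ (backReturn σ x) ≤ x := by
  obtain ⟨n, hn, hlt⟩ := exists_pow_succ_backReturn σ x
  rcases n.eq_zero_or_pos with rfl | hpos
  · simpa using hn.le
  · simpa using (hlt 0 hpos).le

lemma apply_le_self_iff_exists_backReturn_eq (σ : Equiv.Perm α) (y : α) :
    σ y ≤ y ↔ ∃ x, backReturn σ x = y := by
  refine ⟨fun h ↦ ⟨σ y, backReturn_apply_of_apply_le h⟩, ?_⟩
  rintro ⟨x, rfl⟩
  exact (apply_backReturn_le σ x).trans (le_backReturn σ x)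

lemma self_le_apply_iff_forall_backReturn_eq (σ : Equiv.Perm α) (y : α) :
    y ≤ σ y ↔ ∀ x, backReturn σ x = y → x = y := by
  constructor
  · rintro h x rfl
    exact le_antisymm (le_backReturn σ x) (h.trans (apply_backReturn_le σ x))
  · intro h
    by_contra! hlt
    exact hlt.ne (h _ (backReturn_apply_of_apply_le hlt.le))

lemma apply_eq_self_iff_forall_backReturn_eq_iff (σ : Equiv.Perm α) (y : α) :
    σ y = y ↔ ∀ x, backReturn σ x = y ↔ x = y := by
  rw [le_antisymm_iff, apply_le_self_iff_exists_backReturn_eq,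
    self_le_apply_iff_forall_backReturn_eq]
  constructor
  · rintro ⟨⟨x, hx⟩, huniq⟩ z
    refine ⟨huniq z, ?_⟩
    rintro rfl
    exact huniq x hx ▸ hx
  · exact fun h ↦ ⟨⟨y, (h y).2 rfl⟩, fun x ↦ (h x).1⟩

lemma backReturn_eq_self_iff (σ : Equiv.Perm α) (x : α) :
    backReturn σ x = x ↔ ∀ y, σ.SameCycle x y → y ≤ x := by
  obtain ⟨n, hn, hlt⟩ := exists_pow_succ_backReturn σ x
  constructor
  · intro h y hxy
    rw [h] at hn hlt
    have hperiodic : Function.IsPeriodicPt σ (n + 1) x := by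
      rwa [Function.IsPeriodicPt, Function.IsFixedPt, Equiv.Perm.iterate_eq_pow]
    obtain ⟨m, rfl⟩ := hxy.exists_nat_pow_eq
    rw [← Equiv.Perm.iterate_eq_pow, ← hperiodic.iterate_mod_apply m, Equiv.Perm.iterate_eq_pow]
    rcases hr : m % (n + 1) with _ | i
    · rfl
    · exact (hlt i (by have := m.mod_lt (y := n + 1) (by omega); omega)).le
  · intro h
    have hcycle : σ.SameCycle (backReturn σ x) x := ⟨(n + 1 : ℕ), by rwa [zpow_natCast]⟩
    exact le_antisymm (h _ hcycle.symm) (le_backReturn σ x)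

/-- The paths from the common value `y` of `backReturn` to `x` run below `x`, where the two
permutations have the same predecessors, so neither path can leave the other before `x`. -/
lemma inv_apply_eq_of_backReturn_eq {σ τ : Equiv.Perm α} {x : α}
    (hx : backReturn σ x = backReturn τ x) (hlt : ∀ w < x, σ⁻¹ w = τ⁻¹ w) :
    σ⁻¹ x = τ⁻¹ x := by
  obtain ⟨m, hm, hσ⟩ := exists_pow_succ_backReturn σ x
  obtain ⟨n, hn, hτ⟩ := exists_pow_succ_backReturn τ x
  wlog hmn : m ≤ n generalizing σ τ m n
  · exact (this hx.symm (fun w hw ↦ (hlt w hw).symm) n hn hτ m hm hσ (by omega)).symm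
  rw [← hx] at hn hτ
  set y := backReturn σ x
  have inv_pow_succ (ρ : Equiv.Perm α) (i : ℕ) : ρ⁻¹ ((ρ ^ (i + 1)) y) = (ρ ^ i) y := by
    rw [pow_succ', Equiv.Perm.mul_apply]
    exact ρ.symm_apply_apply _
  have agree : ∀ i ≤ m, (σ ^ i) y = (τ ^ i) y := by
    intro i
    induction i with
    | zero => exact fun _ ↦ rfl
    | succ i ih =>
      intro hi
      apply τ⁻¹.injective
      rw [← hlt _ (hσ i hi), inv_pow_succ, inv_pow_succ, ih (by omega)]
  have hinv : σ⁻¹ x = (τ ^ m) y := by rw [← agree m le_rfl, ← inv_pow_succ, hm]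
  rcases hmn.eq_or_lt with rfl | hmn
  · rw [hinv, ← inv_pow_succ, hn]
  · have hbelow := hτ m hmn
    have hsame : (τ ^ (m + 1)) y = x :=
      σ⁻¹.injective (by rw [hlt _ hbelow, inv_pow_succ, hinv])
    exact absurd hsame hbelow.ne

lemma backReturn_injective : Function.Injective (backReturn (α := α)) := by
  intro σ τ h
  rw [← inv_inj]
  ext x
  induction x using WellFoundedLT.induction with
  | ind x ih => exact inv_apply_eq_of_backReturn_eq (congrFun h x) ih

variable (α) in
lemma card_pi_le_eq_card_perm :
    Nat.card (∀ x : α, {y : α // x ≤ y}) = Nat.card (Equiv.Perm α) := by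
  have := Fintype.ofFinite α
  rw [Nat.card_pi, Nat.card_perm]
  simp only [Nat.card_eq_fintype_card, Fintype.card_subtype]
  exact prod_card_filter_le_eq_factorial (Finset.univ : Finset α)

lemma exists_backReturn_eq {g : α → α} (hg : ∀ x, x ≤ g x) :
    ∃ σ : Equiv.Perm α, backReturn σ = g := by
  let code : Equiv.Perm α → ∀ x : α, {y : α // x ≤ y} :=
    fun σ x ↦ ⟨backReturn σ x, le_backReturn σ x⟩
  have hinj : Function.Injective code := fun σ τ h ↦
    backReturn_injective (funext fun x ↦ congrArg Subtype.val (congrFun h x))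
  obtain ⟨σ, hσ⟩ :=
    (hinj.bijective_of_nat_card_le (card_pi_le_eq_card_perm α).le).surjective fun x ↦ ⟨g x, hg x⟩
  exact ⟨σ, funext fun x ↦ congrArg Subtype.val (congrFun hσ x)⟩

end BackReturn

/-- The maps `backReturn σ` of the D-permutations `σ` of `V`, see `isDMap_backReturn_iff`. -/
structure IsDMap {V : Finset ℕ} (g : ↥V → ↥V) : Prop where
  le_apply : ∀ x, x ≤ g x
  apply_eq_of_odd : ∀ x, Odd (g x : ℕ) → g x = x
  exists_apply_eq_of_even : ∀ y : ↥V, Even (y : ℕ) → ∃ x, g x = y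

lemma isDMap_backReturn_iff {V : Finset ℕ} {σ : Equiv.Perm ↥V} :
    IsDMap (backReturn σ) ↔ σ ∈ DPerms V := by
  simp only [DPerms, Finset.mem_filter, Finset.mem_univ, true_and, Subtype.coe_le_coe,
    apply_le_self_iff_exists_backReturn_eq, self_le_apply_iff_forall_backReturn_eq]
  constructor
  · refine fun h y ↦ ⟨?_, h.exists_apply_eq_of_even y⟩
    rintro hy x rfl
    exact (h.apply_eq_of_odd x hy).symm
  · exact fun h ↦ ⟨le_backReturn σ, fun x hx ↦ ((h _).1 hx x rfl).symm, fun y ↦ (h y).2⟩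

lemma bijOn_backReturn_DPerms (V : Finset ℕ) :
    Set.BijOn backReturn {σ | σ ∈ DPerms V} {g | IsDMap g} := by
  refine ⟨fun σ ↦ isDMap_backReturn_iff.2, backReturn_injective.injOn, fun g hg ↦ ?_⟩
  obtain ⟨σ, rfl⟩ := exists_backReturn_eq hg.le_apply
  exact ⟨σ, isDMap_backReturn_iff.1 hg, rfl⟩

lemma apply_eq_self_iff_backReturn_eq_of_odd {V : Finset ℕ} {σ : Equiv.Perm ↥V}
    (hσ : σ ∈ DPerms V) {y : ↥V} (hy : Odd (y : ℕ)) : σ y = y ↔ backReturn σ y = y := by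
  rw [apply_eq_self_iff_forall_backReturn_eq_iff]
  refine ⟨fun h ↦ (h y).2 rfl, fun h x ↦ ⟨?_, fun hx ↦ hx ▸ h⟩⟩
  rintro rfl
  exact ((isDMap_backReturn_iff.2 hσ).apply_eq_of_odd x hy).symm

section ExtendByTop

variable {V S : Finset ℕ} {M : ↥S} {g : ↥V → ↥V} {f : ↥S → ↥S}

/-- `S` arises from `V` by adjoining elements larger than those of `V`, namely its maximum `M`,
which is even, and odd numbers. -/
structure IsTopExtension (V S : Finset ℕ) (M : ↥S) : Prop where
  subset : V ⊆ S
  lt_of_notMem : ∀ v ∈ V, ∀ a ∈ S, a ∉ V → v < a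
  top_notMem : (M : ℕ) ∉ V
  even_top : Even (M : ℕ)
  le_top : ∀ a : ↥S, a ≤ M
  eq_top_of_even : ∀ a : ↥S, Even (a : ℕ) → (a : ℕ) ∉ V → a = M

/-- Extends `g` to `S` by the value `M`, which also replaces the odd values of `g`. -/
def extendByTop (hVS : V ⊆ S) (M : ↥S) (g : ↥V → ↥V) (a : ↥S) : ↥S :=
  if h : ∃ ha : (a : ℕ) ∈ V, Even (g ⟨a, ha⟩ : ℕ) then ⟨g ⟨a, h.fst⟩, hVS (g _).2⟩ else M

/-- Restricts `f` to `V`, replacing the values outside `V` by fixed points; inverse to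
`extendByTop`. -/
def restrictFixing (hVS : V ⊆ S) (f : ↥S → ↥S) (x : ↥V) : ↥V :=
  if h : (f ⟨x, hVS x.2⟩ : ℕ) ∈ V then ⟨f ⟨x, hVS x.2⟩, h⟩ else x

lemma extendByTop_of_even (hVS : V ⊆ S) {x : ↥V} (hx : Even (g x : ℕ)) :
    extendByTop hVS M g ⟨x, hVS x.2⟩ = ⟨g x, hVS (g x).2⟩ :=
  dif_pos ⟨x.2, hx⟩

lemma extendByTop_of_odd (hVS : V ⊆ S) {x : ↥V} (hx : Odd (g x : ℕ)) :
    extendByTop hVS M g ⟨x, hVS x.2⟩ = M :=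
  dif_neg fun h ↦ Nat.not_even_iff_odd.2 hx h.snd

lemma extendByTop_of_notMem (hVS : V ⊆ S) {a : ↥S} (ha : (a : ℕ) ∉ V) :
    extendByTop hVS M g a = M :=
  dif_neg fun h ↦ ha h.fst

lemma restrictFixing_of_mem (hVS : V ⊆ S) {x : ↥V} (hx : (f ⟨x, hVS x.2⟩ : ℕ) ∈ V) :
    restrictFixing hVS f x = ⟨f ⟨x, hVS x.2⟩, hx⟩ :=
  dif_pos hx

lemma restrictFixing_of_notMem (hVS : V ⊆ S) {x : ↥V} (hx : (f ⟨x, hVS x.2⟩ : ℕ) ∉ V) :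
    restrictFixing hVS f x = x :=
  dif_neg hx

lemma extendByTop_eq_top_iff (hVS : V ⊆ S) (hM : (M : ℕ) ∉ V) (x : ↥V) :
    extendByTop hVS M g ⟨x, hVS x.2⟩ = M ↔ Odd (g x : ℕ) := by
  refine ⟨fun h ↦ ?_, extendByTop_of_odd hVS⟩
  by_contra heven
  rw [extendByTop_of_even hVS (Nat.not_odd_iff_even.1 heven)] at h
  exact hM (h ▸ (g x).2)

lemma extendByTop_eq_coe_iff (hVS : V ⊆ S) (hM : (M : ℕ) ∉ V) {a : ↥S} {y : ↥V}
    (hy : Even (y : ℕ)) :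
    extendByTop hVS M g a = ⟨y, hVS y.2⟩ ↔ ∃ ha : (a : ℕ) ∈ V, g ⟨a, ha⟩ = y := by
  constructor
  · intro h
    by_cases hex : ∃ ha : (a : ℕ) ∈ V, Even (g ⟨a, ha⟩ : ℕ)
    · rw [extendByTop, dif_pos hex] at h
      exact ⟨hex.fst, Subtype.ext (congrArg Subtype.val h :)⟩
    · rw [extendByTop, dif_neg hex] at h
      exact absurd (h ▸ y.2) hM
  · rintro ⟨ha, rfl⟩
    exact extendByTop_of_even hVS (x := ⟨a, ha⟩) hy

namespace IsTopExtension

lemma sup_eq (h : IsTopExtension V S M) : S.sup id = M :=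
  le_antisymm (Finset.sup_le fun a ha ↦ h.le_top ⟨a, ha⟩) (Finset.le_sup (f := id) M.2)

lemma filter_even_erase_top (h : IsTopExtension V S M) :
    (S.filter fun a ↦ Even a).erase M = V.filter fun a ↦ Even a := by
  ext a
  simp only [Finset.mem_erase, Finset.mem_filter]
  constructor
  · rintro ⟨hne, haS, heven⟩
    refine ⟨by_contra fun haV ↦ hne ?_, heven⟩
    exact congrArg Subtype.val (h.eq_top_of_even ⟨a, haS⟩ heven haV)
  · rintro ⟨haV, heven⟩
    exact ⟨fun haM ↦ h.top_notMem (haM ▸ haV), h.subset haV, heven⟩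

lemma sndEvenMax_eq (h : IsTopExtension V S M) (hne : V.Nonempty) (hmax : Even (V.max' hne)) :
    sndEvenMax S = V.max' hne := by
  rw [sndEvenMax, h.sup_eq, h.filter_even_erase_top]
  refine le_antisymm (Finset.sup_le fun a ha ↦ V.le_max' a (Finset.mem_filter.1 ha).1) ?_
  exact Finset.le_sup (f := id) (Finset.mem_filter.2 ⟨V.max'_mem hne, hmax⟩)

lemma le_sndEvenMax_iff (h : IsTopExtension V S M) (hne : V.Nonempty)
    (hmax : Even (V.max' hne)) (a : ↥S) : (a : ℕ) ≤ sndEvenMax S ↔ (a : ℕ) ∈ V := by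
  rw [h.sndEvenMax_eq hne hmax]
  refine ⟨fun ha ↦ by_contra fun haV ↦ ?_, V.le_max' a⟩
  exact (h.lt_of_notMem _ (V.max'_mem hne) a a.2 haV).not_ge ha

lemma meS_eq_zero_iff (h : IsTopExtension V S M) (hne : V.Nonempty) (hmax : Even (V.max' hne)) :
    meS S f = 0 ↔ ∀ x : ↥V, Even (x : ℕ) → f ⟨x, h.subset x.2⟩ ≠ M := by
  simp only [meS, Finset.card_eq_zero, Finset.filter_eq_empty_iff, h.sup_eq,
    h.le_sndEvenMax_iff hne hmax]
  constructor
  · exact fun hf x hx hxM ↦ hf (Finset.mem_univ ⟨x, h.subset x.2⟩) ⟨x.2, hx, by rw [hxM]⟩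
  · exact fun hf a _ ⟨haV, heven, haM⟩ ↦ hf ⟨a, haV⟩ heven (Subtype.ext haM)

lemma mem_of_apply_mem (h : IsTopExtension V S M) (hf : f ∈ Staircases S) {a : ↥S}
    (ha : (f a : ℕ) ∈ V) : (a : ℕ) ∈ V := by
  by_contra haV
  exact (h.lt_of_notMem _ ha a a.2 haV).not_ge ((Finset.mem_filter.1 hf).2.1 a).1

lemma apply_eq_top_of_notMem (h : IsTopExtension V S M) (hf : f ∈ Staircases S) {a : ↥S}
    (ha : (f a : ℕ) ∉ V) : f a = M :=
  h.eq_top_of_even _ ((Finset.mem_filter.1 hf).2.1 a).2 ha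

lemma extendByTop_mem_Staircases (h : IsTopExtension V S M) (hg : IsDMap g) :
    extendByTop h.subset M g ∈ Staircases S := by
  refine Finset.mem_filter.2 ⟨Finset.mem_univ _, fun a ↦ ?_, fun b hb ↦ ?_⟩
  · unfold extendByTop
    split_ifs with heven
    · exact ⟨hg.le_apply ⟨a, heven.fst⟩, heven.snd⟩
    · exact ⟨h.le_top a, h.even_top⟩
  · by_cases hbV : (b : ℕ) ∈ V
    · obtain ⟨x, hx⟩ := hg.exists_apply_eq_of_even ⟨b, hbV⟩ hb
      exact ⟨⟨x, h.subset x.2⟩,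
        (extendByTop_eq_coe_iff h.subset h.top_notMem (y := ⟨b, hbV⟩) hb).2 ⟨x.2, hx⟩⟩
    · rw [h.eq_top_of_even b hb hbV]
      exact ⟨M, extendByTop_of_notMem h.subset h.top_notMem⟩

lemma extendByTop_ne_top_of_even (h : IsTopExtension V S M) (hg : IsDMap g) {x : ↥V}
    (hx : Even (x : ℕ)) : extendByTop h.subset M g ⟨x, h.subset x.2⟩ ≠ M := by
  rw [Ne, extendByTop_eq_top_iff h.subset h.top_notMem]
  intro hodd
  rw [hg.apply_eq_of_odd x hodd] at hodd
  exact Nat.not_even_iff_odd.2 hodd hx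

lemma isDMap_restrictFixing (h : IsTopExtension V S M) (hf : f ∈ Staircases S) :
    IsDMap (restrictFixing h.subset f) := by
  obtain ⟨hexc, hsurj⟩ := (Finset.mem_filter.1 hf).2
  refine ⟨fun x ↦ ?_, fun x hodd ↦ ?_, fun y hy ↦ ?_⟩
  · unfold restrictFixing
    split_ifs
    · exact (hexc ⟨x, h.subset x.2⟩).1
    · exact le_rfl
  · refine restrictFixing_of_notMem h.subset fun hmem ↦ ?_
    rw [restrictFixing_of_mem h.subset hmem] at hodd
    exact Nat.not_even_iff_odd.2 hodd (hexc _).2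
  · obtain ⟨a, ha⟩ := hsurj ⟨y, h.subset y.2⟩ hy
    have hfa : (f a : ℕ) ∈ V := ha ▸ y.2
    refine ⟨⟨a, h.mem_of_apply_mem hf hfa⟩, ?_⟩
    rw [restrictFixing_of_mem h.subset hfa]
    exact Subtype.ext (congrArg Subtype.val ha :)

lemma restrictFixing_extendByTop (h : IsTopExtension V S M) (hg : IsDMap g) :
    restrictFixing h.subset (extendByTop h.subset M g) = g := by
  funext x
  rcases Nat.even_or_odd (g x : ℕ) with heven | hodd
  · simp [restrictFixing, extendByTop_of_even h.subset heven]
  · simp [restrictFixing, extendByTop_of_odd h.subset hodd, h.top_notMem,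
      hg.apply_eq_of_odd x hodd]

lemma extendByTop_restrictFixing (h : IsTopExtension V S M) (hf : f ∈ Staircases S)
    (hne_top : ∀ x : ↥V, Even (x : ℕ) → f ⟨x, h.subset x.2⟩ ≠ M) :
    extendByTop h.subset M (restrictFixing h.subset f) = f := by
  funext a
  by_cases hfa : (f a : ℕ) ∈ V
  · have haV := h.mem_of_apply_mem hf hfa
    have hres : restrictFixing h.subset f ⟨a, haV⟩ = ⟨f a, hfa⟩ :=
      restrictFixing_of_mem h.subset hfa
    exact (extendByTop_eq_coe_iff h.subset h.top_notMem
      ((Finset.mem_filter.1 hf).2.1 a).2).2 ⟨haV, hres⟩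
  · have hfM := h.apply_eq_top_of_notMem hf hfa
    rw [hfM]
    refine dif_neg fun ⟨haV, heven⟩ ↦ ?_
    rw [restrictFixing_of_notMem h.subset hfa] at heven
    exact hne_top ⟨a, haV⟩ heven hfM

lemma bijOn_extendByTop (h : IsTopExtension V S M) (hne : V.Nonempty)
    (hmax : Even (V.max' hne)) :
    Set.BijOn (extendByTop h.subset M) {g | IsDMap g}
      {f | f ∈ Staircases S ∧ meS S f = 0} := by
  simp only [h.meS_eq_zero_iff hne hmax]
  refine Set.InvOn.bijOn (f' := restrictFixing h.subset) ⟨fun g hg ↦ ?_, fun f hf ↦ ?_⟩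
    (fun g hg ↦ ⟨?_, fun x ↦ ?_⟩) fun f hf ↦ ?_
  · exact h.restrictFixing_extendByTop hg
  · exact h.extendByTop_restrictFixing hf.1 hf.2
  · exact h.extendByTop_mem_Staircases hg
  · exact h.extendByTop_ne_top_of_even hg
  · exact h.isDMap_restrictFixing hf.1

lemma isFixedPtS_extendByTop_iff (h : IsTopExtension V S M) (hne : V.Nonempty)
    (hmax : Even (V.max' hne)) (x : ↥V) :
    IsFixedPtS S (extendByTop h.subset M g) ⟨x, h.subset x.2⟩ ↔ Even (x : ℕ) ∧ g x = x := by
  rw [IsFixedPtS, h.le_sndEvenMax_iff hne hmax, and_iff_right x.2]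
  refine and_congr_right fun hx ↦ (extendByTop_eq_coe_iff h.subset h.top_notMem hx).trans ?_
  exact exists_prop_of_true x.2

lemma isolated_extendByTop_iff (h : IsTopExtension V S M) (hne : V.Nonempty)
    (hmax : Even (V.max' hne)) (x : ↥V) :
    (IsFixedPtS S (extendByTop h.subset M g) ⟨x, h.subset x.2⟩ ∧
        ∀ b, extendByTop h.subset M g b = ⟨x, h.subset x.2⟩ → b = ⟨x, h.subset x.2⟩) ↔
      Even (x : ℕ) ∧ ∀ y, g y = x ↔ y = x := by
  rw [h.isFixedPtS_extendByTop_iff hne hmax, and_assoc]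
  refine and_congr_right fun hx ↦ ?_
  simp only [extendByTop_eq_coe_iff h.subset h.top_notMem hx]
  constructor
  · rintro ⟨hfix, huniq⟩ y
    refine ⟨fun hy ↦ ?_, fun hy ↦ hy ▸ hfix⟩
    exact Subtype.ext (congrArg Subtype.val (huniq ⟨y, h.subset y.2⟩ ⟨y.2, hy⟩) :)
  · refine fun hfib ↦ ⟨(hfib x).2 rfl, fun b ⟨hb, hbx⟩ ↦ ?_⟩
    exact Subtype.ext (congrArg Subtype.val ((hfib _).1 hbx) :)

lemma oddMax_extendByTop_iff (h : IsTopExtension V S M) (hne : V.Nonempty)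
    (hmax : Even (V.max' hne)) (hg : IsDMap g) (x : ↥V) :
    ((x : ℕ) ≤ sndEvenMax S ∧ Odd (x : ℕ) ∧
        (extendByTop h.subset M g ⟨x, h.subset x.2⟩ : ℕ) = S.sup id) ↔
      Odd (x : ℕ) ∧ g x = x := by
  rw [h.le_sndEvenMax_iff hne hmax ⟨x, h.subset x.2⟩, and_iff_right x.2, h.sup_eq,
    Subtype.coe_inj, extendByTop_eq_top_iff h.subset h.top_notMem]
  exact and_congr_right fun hx ↦ ⟨hg.apply_eq_of_odd x, fun hfix ↦ hfix.symm ▸ hx⟩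

end IsTopExtension

lemma exists_isTopExtension_union {R : Finset ℕ}
    (heven : (R.filter fun a ↦ Even a).card = 1) (hbig : ∀ a ∈ R, ∀ v ∈ V, v < a)
    (hord : ∀ a ∈ R, ∀ b ∈ R, Even a → Odd b → b < a) :
    ∃ M : ↥(V ∪ R), IsTopExtension V (V ∪ R) M := by
  obtain ⟨m, hm⟩ := Finset.card_eq_one.1 heven
  have mem_even_iff (a : ℕ) : a ∈ R ∧ Even a ↔ a = m := by
    simpa using Finset.ext_iff.1 hm a
  obtain ⟨hmR, hme⟩ := (mem_even_iff m).2 rfl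
  have mem_right {a : ℕ} (ha : a ∈ V ∪ R) (haV : a ∉ V) : a ∈ R :=
    (Finset.mem_union.1 ha).resolve_left haV
  refine ⟨⟨m, Finset.mem_union_right V hmR⟩, {
    subset := Finset.subset_union_left
    lt_of_notMem := fun v hv a ha haV ↦ hbig a (mem_right ha haV) v hv
    top_notMem := fun hmV ↦ (hbig m hmR m hmV).false
    even_top := hme
    le_top := ?_
    eq_top_of_even := fun a ha haV ↦ Subtype.ext ((mem_even_iff a).1 ⟨mem_right a.2 haV, ha⟩) }⟩
  rintro ⟨a, ha⟩
  rcases Finset.mem_union.1 ha with haV | haR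
  · exact (hbig m hmR a haV).le
  · rcases Nat.even_or_odd a with hae | hao
    · exact ((mem_even_iff a).1 ⟨haR, hae⟩).le
    · exact (hord m hmR a haR hme hao).le

end ExtendByTop

/-- Let `V` be a finite set of positive integers with even maximum and `R_k` a set of
`k` odd numbers larger than `max V` together with one even number larger than all of
them.  Then there is a bijection between the D-permutations of `V` and the
generalized surjective staircases on `V ∪ R_k` without even maxima, under which
even cycle maxima correspond to fixed points, even fixed points to isolated fixed
points, and odd fixed points to odd maxima. -/
theorem dPerm_staircase_bijection (k : ℕ) (V Rk : Finset ℕ) (hne : V.Nonempty)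
    (hpos : ∀ v ∈ V, 0 < v) (hmax : Even (V.max' hne))
    (hRodd : (Rk.filter fun a => Odd a).card = k)
    (hReven : (Rk.filter fun a => Even a).card = 1)
    (hRbig : ∀ a ∈ Rk, ∀ v ∈ V, v < a)
    (hRord : ∀ a ∈ Rk, ∀ b ∈ Rk, Even a → Odd b → b < a) :
    ∃ e : {σ : Equiv.Perm ↥V // σ ∈ DPerms V} ≃
        {f : ↥(V ∪ Rk) → ↥(V ∪ Rk) // f ∈ Staircases (V ∪ Rk) ∧ meS (V ∪ Rk) f = 0},
      ∀ (σ : {σ : Equiv.Perm ↥V // σ ∈ DPerms V}) (j : ℕ) (hj : j ∈ V),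
        ((Even j ∧ ∀ b : ↥V, (σ : Equiv.Perm ↥V).SameCycle ⟨j, hj⟩ b → (b : ℕ) ≤ j) ↔
          IsFixedPtS (V ∪ Rk) (e σ : ↥(V ∪ Rk) → ↥(V ∪ Rk))
            ⟨j, Finset.mem_union_left _ hj⟩) ∧
        ((Even j ∧ (σ : Equiv.Perm ↥V) ⟨j, hj⟩ = ⟨j, hj⟩) ↔
          (IsFixedPtS (V ∪ Rk) (e σ : ↥(V ∪ Rk) → ↥(V ∪ Rk))
              ⟨j, Finset.mem_union_left _ hj⟩ ∧
            ∀ b : ↥(V ∪ Rk), (e σ : ↥(V ∪ Rk) → ↥(V ∪ Rk)) b =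
                ⟨j, Finset.mem_union_left _ hj⟩ →
              b = ⟨j, Finset.mem_union_left _ hj⟩)) ∧
        ((Odd j ∧ (σ : Equiv.Perm ↥V) ⟨j, hj⟩ = ⟨j, hj⟩) ↔
          (j ≤ sndEvenMax (V ∪ Rk) ∧ Odd j ∧
            (((e σ : ↥(V ∪ Rk) → ↥(V ∪ Rk)) ⟨j, Finset.mem_union_left _ hj⟩ : ℕ) =
              (V ∪ Rk).sup id))) := by
  obtain ⟨M, h⟩ := exists_isTopExtension_union hReven hRbig hRord
  have hbij := (h.bijOn_extendByTop hne hmax).comp (bijOn_backReturn_DPerms V)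
  refine ⟨hbij.equiv, fun ⟨σ, hσ⟩ j hj ↦ ⟨?_, ?_, ?_⟩⟩
  · exact (and_congr_right' (backReturn_eq_self_iff σ ⟨j, hj⟩).symm).trans
      (h.isFixedPtS_extendByTop_iff hne hmax ⟨j, hj⟩).symm
  · exact (and_congr_right' (apply_eq_self_iff_forall_backReturn_eq_iff σ ⟨j, hj⟩)).trans
      (h.isolated_extendByTop_iff hne hmax ⟨j, hj⟩).symm
  · exact (and_congr_right (apply_eq_self_iff_backReturn_eq_of_odd hσ)).trans
      (h.oddMax_extendByTop_iff hne hmax (isDMap_backReturn_iff.2 hσ) ⟨j, hj⟩).symm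

end
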